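/- (Theorem 4, boundedness.) Along any solution of the high-order-tuner error model, the functions e, Θ̂ and Ξ are bounded on [0,∞); that is, there exists C > 0 (depending on the initial values and the fixed data) such that ‖e(t)‖ ≤ C, ‖Θ̂(t)‖ ≤ C and ‖Ξ(t)‖ ≤ C for all t ≥ 0. -/

import Mathlib

open Matrix MeasureTheory Filter

/-!
Write `X = Ξ - Θ` and `Y = Θ̂ - Ξ`. The function
`V = eᵀPe + γ⁻¹ (tr XᵀΛX + tr YᵀΛY)` is nonincreasing along solutions: the `X`-terms of `V'` cancel
and, with `w = BᵀPe`,
`V' = eᵀ(AᵀP + PA)e + 4 wᵀΛYΦ - (2β/γ)(1 + μ ΦᵀΦ) tr YᵀΛY`.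
The Cauchy–Schwarz inequality for the form `Λ` gives
`(wᵀΛYΦ)² ≤ ‖Λ‖ ‖PB‖_F² |e|² · |Φ|² tr YᵀΛY`, so by AM-GM the cross term is absorbed by the two
negative ones when `μ` is large. Since `P` and `Λ` are positive definite, `V ≤ V(0)` bounds
`e`, `X` and `Y`.
-/

section MatrixAlgebra

variable {R m n k : Type*} [CommSemiring R] [Fintype m] [Fintype n] [Fintype k]

theorem trace_transpose_mul_self_eq_sum_sq (A : Matrix m n R) :
    (Aᵀ * A).trace = ∑ i, ∑ j, A i j ^ 2 := by
  rw [Finset.sum_comm]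
  simp only [trace, diag_apply, mul_apply, transpose_apply, sq]

theorem trace_transpose_mul_mul_eq_sum_col (M : Matrix m m R) (X Y : Matrix m n R) :
    (Xᵀ * M * Y).trace = ∑ j, X.col j ⬝ᵥ M *ᵥ Y.col j := by
  simp only [trace, diag_apply, Matrix.mul_assoc, mul_apply, dotProduct, mulVec, col_apply,
    transpose_apply]

theorem dotProduct_mulVec_comm_of_isSymm {M : Matrix n n R} (hM : M.IsSymm) (x y : n → R) :
    x ⬝ᵥ M *ᵥ y = y ⬝ᵥ M *ᵥ x := by
  rw [← dotProduct_transpose_mulVec, hM.eq]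

theorem two_mul_dotProduct_mulVec_mulVec_of_isSymm {P : Matrix n n R} (hP : P.IsSymm)
    (A : Matrix n n R) (x : n → R) :
    2 * (x ⬝ᵥ P *ᵥ (A *ᵥ x)) = x ⬝ᵥ (Aᵀ * P + P * A) *ᵥ x := by
  rw [add_mulVec, dotProduct_add, ← mulVec_mulVec, ← mulVec_mulVec, dotProduct_transpose_mulVec,
    dotProduct_comm (P *ᵥ x), dotProduct_mulVec_comm_of_isSymm hP x, ← dotProduct_comm (P *ᵥ x),
    two_mul]

theorem trace_transpose_mul_mul_vecMulVec_of_isSymm {M : Matrix m m R} (hM : M.IsSymm)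
    (X : Matrix m k R) (w : m → R) (φ : k → R) :
    (Xᵀ * M * vecMulVec w φ).trace = w ⬝ᵥ M *ᵥ (X *ᵥ φ) := by
  rw [mul_vecMulVec, trace_vecMulVec, dotProduct_comm, ← mulVec_mulVec,
    dotProduct_transpose_mulVec, dotProduct_comm, dotProduct_mulVec_comm_of_isSymm hM]

theorem dotProduct_mulVec_mul_mul_mulVec_of_isSymm {P : Matrix n n R} (hP : P.IsSymm)
    (B : Matrix n m R) (M : Matrix m m R) (Z : Matrix m k R) (x : n → R) (φ : k → R) :
    x ⬝ᵥ P *ᵥ ((B * M * Z) *ᵥ φ) = ((Bᵀ * P) *ᵥ x) ⬝ᵥ M *ᵥ (Z *ᵥ φ) := by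
  rw [dotProduct_mulVec_comm_of_isSymm hP, ← mulVec_mulVec, ← mulVec_mulVec, ← mulVec_mulVec,
    dotProduct_comm, dotProduct_comm (Bᵀ *ᵥ _), dotProduct_transpose_mulVec]

end MatrixAlgebra

section QuadraticFormBounds

variable {m n k : Type*} [Fintype m] [Fintype n] [Fintype k]

theorem sq_dotProduct_mulVec_le_of_posSemidef {M : Matrix n n ℝ} (hM : M.PosSemidef)
    (x y : n → ℝ) : (x ⬝ᵥ M *ᵥ y) ^ 2 ≤ (x ⬝ᵥ M *ᵥ x) * (y ⬝ᵥ M *ᵥ y) := by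
  classical
  have hform_nonneg (z : n → ℝ) : 0 ≤ toBilin' M z z := by
    simpa [toBilin'_apply'] using hM.dotProduct_mulVec_nonneg z
  have hcs := (toBilin' M).apply_mul_apply_le_of_forall_zero_le hform_nonneg x y
  simp only [toBilin'_apply'] at hcs
  rwa [dotProduct_mulVec_comm_of_isSymm (isHermitian_iff_isSymm.1 hM.isHermitian) y x, ← sq] at hcs

theorem mulVec_dotProduct_mulVec_self_le (A : Matrix m n ℝ) (x : n → ℝ) :
    (A *ᵥ x) ⬝ᵥ (A *ᵥ x) ≤ (∑ i, ∑ j, A i j ^ 2) * (x ⬝ᵥ x) := by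
  simp only [dotProduct, mulVec, ← sq]
  rw [Finset.sum_mul]
  exact Finset.sum_le_sum fun i _ => Finset.sum_mul_sq_le_sq_mul_sq Finset.univ (A i) x

theorem dotProduct_mulVec_le_trace_mul_of_posSemidef {M : Matrix n n ℝ} (hM : M.PosSemidef)
    (x : n → ℝ) : x ⬝ᵥ M *ᵥ x ≤ M.trace * (x ⬝ᵥ x) := by
  classical
  obtain ⟨R, rfl⟩ : ∃ R : Matrix n n ℝ, M = Rᵀ * R := by
    open scoped MatrixOrder in
    exact CStarAlgebra.nonneg_iff_eq_star_mul_self.mp hM.nonneg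
  rw [trace_transpose_mul_self_eq_sum_sq, ← mulVec_mulVec, dotProduct_transpose_mulVec]
  exact mulVec_dotProduct_mulVec_self_le R x

theorem mulVec_dotProduct_mulVec_mulVec_le_trace_mul {M : Matrix m m ℝ} (hM : M.PosSemidef)
    (Y : Matrix m k ℝ) (φ : k → ℝ) :
    (Y *ᵥ φ) ⬝ᵥ M *ᵥ (Y *ᵥ φ) ≤ (Yᵀ * M * Y).trace * (φ ⬝ᵥ φ) := by
  have hgram : φ ⬝ᵥ (Yᵀ * M * Y) *ᵥ φ = (Y *ᵥ φ) ⬝ᵥ M *ᵥ (Y *ᵥ φ) := by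
    rw [← mulVec_mulVec, ← mulVec_mulVec, dotProduct_transpose_mulVec, dotProduct_comm]
  rw [← hgram]
  exact dotProduct_mulVec_le_trace_mul_of_posSemidef (hM.conjTranspose_mul_mul_same Y) φ

theorem trace_transpose_mul_mul_self_nonneg {M : Matrix m m ℝ} (hM : M.PosSemidef)
    (Y : Matrix m k ℝ) : 0 ≤ (Yᵀ * M * Y).trace :=
  (hM.conjTranspose_mul_mul_same Y).trace_nonneg

theorem dotProduct_mulVec_le_opNorm_mul [DecidableEq n] (M : Matrix n n ℝ) (x : n → ℝ) :
    x ⬝ᵥ M *ᵥ x ≤ ‖toEuclideanCLM (𝕜 := ℝ) M‖ * (x ⬝ᵥ x) := by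
  set z : EuclideanSpace ℝ n := WithLp.toLp 2 x
  have hz : ‖z‖ * ‖z‖ = x ⬝ᵥ x := (real_inner_self_eq_norm_mul_norm z).symm
  calc x ⬝ᵥ M *ᵥ x = inner ℝ z (toEuclideanCLM (𝕜 := ℝ) M z) := by rw [inner_toEuclideanCLM]
    _ ≤ ‖z‖ * ‖toEuclideanCLM (𝕜 := ℝ) M z‖ := real_inner_le_norm _ _
    _ ≤ ‖z‖ * (‖toEuclideanCLM (𝕜 := ℝ) M‖ * ‖z‖) := by
      gcongr
      exact ContinuousLinearMap.le_opNorm _ _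
    _ = ‖toEuclideanCLM (𝕜 := ℝ) M‖ * (x ⬝ᵥ x) := by rw [← hz]; ring

theorem sq_mulVec_dotProduct_mulVec_mulVec_le [DecidableEq m] {M : Matrix m m ℝ}
    (hM : M.PosSemidef) (C : Matrix m n ℝ) (x : n → ℝ) (Y : Matrix m k ℝ) (φ : k → ℝ) :
    ((C *ᵥ x) ⬝ᵥ M *ᵥ (Y *ᵥ φ)) ^ 2 ≤
      ‖toEuclideanCLM (𝕜 := ℝ) M‖ * (∑ i, ∑ j, C i j ^ 2) * (x ⬝ᵥ x) *
        ((Yᵀ * M * Y).trace * (φ ⬝ᵥ φ)) := by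
  have hYφ_nonneg : 0 ≤ (Y *ᵥ φ) ⬝ᵥ M *ᵥ (Y *ᵥ φ) := hM.dotProduct_mulVec_nonneg _
  have hCx_nonneg : 0 ≤ (C *ᵥ x) ⬝ᵥ M *ᵥ (C *ᵥ x) := hM.dotProduct_mulVec_nonneg _
  have hCx : (C *ᵥ x) ⬝ᵥ M *ᵥ (C *ᵥ x) ≤
      ‖toEuclideanCLM (𝕜 := ℝ) M‖ * (∑ i, ∑ j, C i j ^ 2) * (x ⬝ᵥ x) := by
    rw [mul_assoc]
    exact (dotProduct_mulVec_le_opNorm_mul M _).trans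
      (mul_le_mul_of_nonneg_left (mulVec_dotProduct_mulVec_self_le C x) (norm_nonneg _))
  exact (sq_dotProduct_mulVec_le_of_posSemidef hM _ _).trans
    (mul_le_mul hCx (mulVec_dotProduct_mulVec_mulVec_le_trace_mul hM Y φ) hYφ_nonneg
      (hCx_nonneg.trans hCx))

theorem four_mul_mulVec_dotProduct_mulVec_mulVec_le [DecidableEq m] {M : Matrix m m ℝ}
    (hM : M.PosSemidef) (C : Matrix m n ℝ) {a b : ℝ} (ha : 0 ≤ a) (hb : 0 ≤ b)
    (hab : 4 * (‖toEuclideanCLM (𝕜 := ℝ) M‖ * ∑ i, ∑ j, C i j ^ 2) ≤ a * b)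
    (x : n → ℝ) (Y : Matrix m k ℝ) (φ : k → ℝ) :
    4 * ((C *ᵥ x) ⬝ᵥ M *ᵥ (Y *ᵥ φ)) ≤ a * (x ⬝ᵥ x) + b * ((Yᵀ * M * Y).trace * (φ ⬝ᵥ φ)) := by
  set cross := (C *ᵥ x) ⬝ᵥ M *ᵥ (Y *ᵥ φ)
  set p := x ⬝ᵥ x
  set q := (Yᵀ * M * Y).trace * (φ ⬝ᵥ φ)
  have hp : 0 ≤ p := dotProduct_star_self_nonneg x
  have hq : 0 ≤ q :=
    mul_nonneg (trace_transpose_mul_mul_self_nonneg hM Y) (dotProduct_star_self_nonneg φ)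
  have hcross_sq : (2 * cross) ^ 2 ≤ (a * p) * (b * q) :=
    calc (2 * cross) ^ 2 = 4 * cross ^ 2 := by ring
      _ ≤ 4 * (‖toEuclideanCLM (𝕜 := ℝ) M‖ * (∑ i, ∑ j, C i j ^ 2) * p * q) := by
        gcongr
        exact sq_mulVec_dotProduct_mulVec_mulVec_le hM C x Y φ
      _ = 4 * (‖toEuclideanCLM (𝕜 := ℝ) M‖ * ∑ i, ∑ j, C i j ^ 2) * (p * q) := by ring
      _ ≤ a * b * (p * q) := by gcongr
      _ = (a * p) * (b * q) := by ring
  calc 4 * cross = 2 * (2 * cross) := by ring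
    _ ≤ a * p + b * q :=
      two_mul_le_add_of_sq_le_mul (mul_nonneg ha hp) (mul_nonneg hb hq) hcross_sq

/- Cauchy–Schwarz for the form `M`, applied to `x` and `M⁻¹x`, bounds `(xᵀx)²` by
`(xᵀMx)(xᵀM⁻¹x)`. -/
theorem dotProduct_self_le_trace_inv_mul_of_posDef [DecidableEq n] {M : Matrix n n ℝ}
    (hM : M.PosDef) (x : n → ℝ) : x ⬝ᵥ x ≤ M⁻¹.trace * (x ⬝ᵥ M *ᵥ x) := by
  rcases eq_or_ne x 0 with rfl | hx
  · simp
  have hx_pos : 0 < x ⬝ᵥ x := by simpa using dotProduct_star_self_pos_iff.2 hx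
  have hMx_nonneg : 0 ≤ x ⬝ᵥ M *ᵥ x := hM.posSemidef.dotProduct_mulVec_nonneg x
  have hMinv : M *ᵥ (M⁻¹ *ᵥ x) = x := by
    rw [mulVec_mulVec, mul_nonsing_inv M hM.det_pos.ne'.isUnit, one_mulVec]
  refine le_of_mul_le_mul_right ?_ hx_pos
  calc (x ⬝ᵥ x) * (x ⬝ᵥ x) = (x ⬝ᵥ M *ᵥ (M⁻¹ *ᵥ x)) ^ 2 := by rw [hMinv, sq]
    _ ≤ (x ⬝ᵥ M *ᵥ x) * ((M⁻¹ *ᵥ x) ⬝ᵥ M *ᵥ (M⁻¹ *ᵥ x)) :=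
      sq_dotProduct_mulVec_le_of_posSemidef hM.posSemidef _ _
    _ = (x ⬝ᵥ M *ᵥ x) * (x ⬝ᵥ M⁻¹ *ᵥ x) := by rw [hMinv, dotProduct_comm (M⁻¹ *ᵥ x)]
    _ ≤ (x ⬝ᵥ M *ᵥ x) * (M⁻¹.trace * (x ⬝ᵥ x)) := by
      gcongr
      exact dotProduct_mulVec_le_trace_mul_of_posSemidef hM.inv.posSemidef x
    _ = M⁻¹.trace * (x ⬝ᵥ M *ᵥ x) * (x ⬝ᵥ x) := by ring

theorem sum_sq_le_trace_inv_mul_of_posDef [DecidableEq m] {M : Matrix m m ℝ} (hM : M.PosDef)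
    (X : Matrix m k ℝ) : ∑ i, ∑ j, X i j ^ 2 ≤ M⁻¹.trace * (Xᵀ * M * X).trace := by
  rw [trace_transpose_mul_mul_eq_sum_col, Finset.mul_sum, Finset.sum_comm]
  refine Finset.sum_le_sum fun j _ => ?_
  simpa [dotProduct, sq] using dotProduct_self_le_trace_inv_mul_of_posDef hM (X.col j)

open scoped Matrix.Norms.Frobenius in
theorem sqrt_sum_sq_add_le (X Y : Matrix m k ℝ) :
    √(∑ i, ∑ j, (X + Y) i j ^ 2) ≤ √(∑ i, ∑ j, X i j ^ 2) + √(∑ i, ∑ j, Y i j ^ 2) := by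
  have hnorm (Z : Matrix m k ℝ) : ‖Z‖ = √(∑ i, ∑ j, Z i j ^ 2) := by
    simp [frobenius_norm_def, Real.sqrt_eq_rpow]
  simpa only [hnorm] using norm_add_le X Y

end QuadraticFormBounds

section Derivatives

variable {m n k : Type*} [Fintype m] [Fintype n] [Fintype k] {s : Set ℝ} {t : ℝ}

theorem hasDerivWithinAt_dotProduct_mulVec_self {M : Matrix n n ℝ} (hM : M.IsSymm)
    {x : ℝ → n → ℝ} {x' : n → ℝ} (hx : HasDerivWithinAt x x' s t) :
    HasDerivWithinAt (fun r => x r ⬝ᵥ M *ᵥ x r) (2 * (x t ⬝ᵥ M *ᵥ x')) s t := by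
  have hMx : HasDerivWithinAt (fun r => M *ᵥ x r) (M *ᵥ x') s t :=
    (mulVecLin M).toContinuousLinearMap.hasFDerivAt.comp_hasDerivWithinAt t hx
  have hsum := HasDerivWithinAt.fun_sum (u := Finset.univ) fun i _ =>
    (hasDerivWithinAt_pi.1 hx i).fun_mul (hasDerivWithinAt_pi.1 hMx i)
  refine hsum.congr_deriv ?_
  rw [Finset.sum_add_distrib, two_mul]
  exact congrArg (· + _) (dotProduct_mulVec_comm_of_isSymm hM _ _)

theorem hasDerivWithinAt_trace_transpose_mul_mul_self {M : Matrix m m ℝ} (hM : M.IsSymm)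
    {X : ℝ → Matrix m k ℝ} {X' : Matrix m k ℝ}
    (hX : ∀ i j, HasDerivWithinAt (fun r => X r i j) (X' i j) s t) :
    HasDerivWithinAt (fun r => ((X r)ᵀ * M * X r).trace) (2 * ((X t)ᵀ * M * X').trace) s t := by
  simp only [trace_transpose_mul_mul_eq_sum_col, Finset.mul_sum]
  exact HasDerivWithinAt.fun_sum fun j _ =>
    hasDerivWithinAt_dotProduct_mulVec_self hM (hasDerivWithinAt_pi.2 fun i => hX i j)

theorem antitoneOn_Ici_of_hasDerivWithinAt_nonpos {f f' : ℝ → ℝ} {a : ℝ}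
    (hf : ∀ t ∈ Set.Ici a, HasDerivWithinAt f (f' t) (Set.Ici a) t)
    (hf' : ∀ t ∈ Set.Ici a, f' t ≤ 0) : AntitoneOn f (Set.Ici a) :=
  antitoneOn_of_hasDerivWithinAt_nonpos (convex_Ici a)
    (fun t ht => (hf t ht).continuousWithinAt)
    (fun t ht => (hf t (interior_subset ht)).mono interior_subset)
    fun t ht => hf' t (interior_subset ht)

end Derivatives

section Tuner

variable {m n k : Type*} [Fintype m] [Fintype n] [Fintype k]

/-- The curves `(e, Θh, Ξ)` solve the high-order-tuner error model on `[0, ∞)`, with tracking error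
`e`, parameter estimate `Θh` and auxiliary estimate `Ξ`. Derivatives are one-sided at `0`, and those
of the matrix-valued curves are taken entrywise. -/
structure IsTunerSolution (A P : Matrix n n ℝ) (B : Matrix n m ℝ) (Λ : Matrix m m ℝ)
    (Θ : Matrix m k ℝ) (γ β μ : ℝ) (Φ : ℝ → k → ℝ) (e : ℝ → n → ℝ) (Θh Ξ : ℝ → Matrix m k ℝ) :
    Prop where
  hasDerivWithinAt_error : ∀ t ∈ Set.Ici (0 : ℝ),
    HasDerivWithinAt e (A *ᵥ e t + (B * Λ * (Θh t - Θ)) *ᵥ Φ t) (Set.Ici 0) t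
  hasDerivWithinAt_auxiliary : ∀ t ∈ Set.Ici (0 : ℝ), ∀ i j,
    HasDerivWithinAt (fun s => Ξ s i j) (-γ * (((Bᵀ * P) *ᵥ e t) i * Φ t j)) (Set.Ici 0) t
  hasDerivWithinAt_estimate : ∀ t ∈ Set.Ici (0 : ℝ), ∀ i j,
    HasDerivWithinAt (fun s => Θh s i j)
      (-β * (Θh t i j - Ξ t i j) * (1 + μ * (Φ t ⬝ᵥ Φ t))) (Set.Ici 0) t

/-- The Lyapunov function of the tuner at tracking error `x`, with `X = Ξ - Θ` and `Y = Θh - Ξ`. -/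
noncomputable def tunerLyapunov (P : Matrix n n ℝ) (Λ : Matrix m m ℝ) (γ : ℝ) (x : n → ℝ)
    (X Y : Matrix m k ℝ) : ℝ :=
  x ⬝ᵥ P *ᵥ x + γ⁻¹ * ((Xᵀ * Λ * X).trace + (Yᵀ * Λ * Y).trace)

/-- The derivative of `tunerLyapunov` along solutions at tracking error `x`, with `Y = Θh - Ξ` and
regressor value `φ`; the contribution of `Ξ - Θ` has cancelled. -/
noncomputable def tunerLyapunovRate (A P : Matrix n n ℝ) (B : Matrix n m ℝ) (Λ : Matrix m m ℝ)
    (γ β μ : ℝ) (x : n → ℝ) (Y : Matrix m k ℝ) (φ : k → ℝ) : ℝ :=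
  x ⬝ᵥ (Aᵀ * P + P * A) *ᵥ x + 4 * (((Bᵀ * P) *ᵥ x) ⬝ᵥ Λ *ᵥ (Y *ᵥ φ)) -
    2 * β / γ * (1 + μ * (φ ⬝ᵥ φ)) * (Yᵀ * Λ * Y).trace

variable {A P : Matrix n n ℝ} {B : Matrix n m ℝ} {Λ : Matrix m m ℝ} {Θ : Matrix m k ℝ}
  {γ β μ κ : ℝ} {Φ : ℝ → k → ℝ} {e : ℝ → n → ℝ} {Θh Ξ : ℝ → Matrix m k ℝ}

theorem IsTunerSolution.hasDerivWithinAt_tunerLyapunov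
    (h : IsTunerSolution A P B Λ Θ γ β μ Φ e Θh Ξ) (hP : P.IsSymm) (hΛ : Λ.IsSymm) (hγ : γ ≠ 0)
    {t : ℝ} (ht : t ∈ Set.Ici (0 : ℝ)) :
    HasDerivWithinAt (fun s => tunerLyapunov P Λ γ (e s) (Ξ s - Θ) (Θh s - Ξ s))
      (tunerLyapunovRate A P B Λ γ β μ (e t) (Θh t - Ξ t) (Φ t)) (Set.Ici 0) t := by
  set w := (Bᵀ * P) *ᵥ e t with hw
  have hX (i : m) (j : k) : HasDerivWithinAt (fun s => (Ξ s - Θ) i j)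
      ((-γ • vecMulVec w (Φ t)) i j) (Set.Ici 0) t :=
    (h.hasDerivWithinAt_auxiliary t ht i j).sub_const (Θ i j)
  have hY (i : m) (j : k) : HasDerivWithinAt (fun s => (Θh s - Ξ s) i j)
      ((-(β * (1 + μ * (Φ t ⬝ᵥ Φ t))) • (Θh t - Ξ t) + γ • vecMulVec w (Φ t)) i j)
      (Set.Ici 0) t := by
    refine ((h.hasDerivWithinAt_estimate t ht i j).sub
      (h.hasDerivWithinAt_auxiliary t ht i j)).congr_deriv ?_
    simp only [Matrix.add_apply, Matrix.smul_apply, Matrix.sub_apply, vecMulVec_apply,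
      smul_eq_mul, hw]
    ring
  have hsplit : Θh t - Θ = (Ξ t - Θ) + (Θh t - Ξ t) := by abel
  refine ((hasDerivWithinAt_dotProduct_mulVec_self hP (h.hasDerivWithinAt_error t ht)).add
    (((hasDerivWithinAt_trace_transpose_mul_mul_self hΛ hX).add
      (hasDerivWithinAt_trace_transpose_mul_mul_self hΛ hY)).const_mul γ⁻¹)).congr_deriv ?_
  rw [mulVec_add, dotProduct_add, mul_add, two_mul_dotProduct_mulVec_mulVec_of_isSymm hP,
    dotProduct_mulVec_mul_mul_mulVec_of_isSymm hP, hsplit]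
  simp only [tunerLyapunovRate, add_mulVec, mulVec_add, dotProduct_add, Matrix.mul_add,
    Matrix.mul_smul, trace_add, trace_smul, smul_eq_mul,
    trace_transpose_mul_mul_vecMulVec_of_isSymm hΛ, ← hw]
  field_simp
  ring

theorem tunerLyapunovRate_nonpos [DecidableEq m] [DecidableEq n] (hP : P.IsSymm)
    (hΛ : Λ.PosSemidef) (hκ : 0 < κ) (hA : (-(Aᵀ * P + P * A) - κ • 1).PosSemidef)
    (hγ : 0 < γ) (hβ : 0 ≤ β)
    (hμ : 2 * γ * (‖toEuclideanCLM (𝕜 := ℝ) Λ‖ * ∑ i, ∑ j, (P * B) i j ^ 2) ≤ κ * (β * μ))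
    (x : n → ℝ) (Y : Matrix m k ℝ) (φ : k → ℝ) :
    tunerLyapunovRate A P B Λ γ β μ x Y φ ≤ 0 := by
  set T := (Yᵀ * Λ * Y).trace
  set cross := ((Bᵀ * P) *ᵥ x) ⬝ᵥ Λ *ᵥ (Y *ᵥ φ)
  have hdecay : x ⬝ᵥ (Aᵀ * P + P * A) *ᵥ x ≤ -(κ * (x ⬝ᵥ x)) := by
    have := hA.dotProduct_mulVec_nonneg x
    simp only [star_trivial, sub_mulVec, neg_mulVec, smul_mulVec, one_mulVec, dotProduct_sub,
      dotProduct_neg, dotProduct_smul, smul_eq_mul] at this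
    linarith
  have hβμ : 0 ≤ β * μ := nonneg_of_mul_nonneg_right (le_trans (by positivity) hμ) hκ
  have hfrob : ∑ i, ∑ j, (Bᵀ * P) i j ^ 2 = ∑ i, ∑ j, (P * B) i j ^ 2 := by
    have htranspose : Bᵀ * P = (P * B)ᵀ := by rw [transpose_mul, hP.eq]
    simp only [htranspose, transpose_apply]
    exact Finset.sum_comm
  have hcross : 4 * cross ≤ κ * (x ⬝ᵥ x) + 2 / γ * (β * μ) * (T * (φ ⬝ᵥ φ)) := by
    refine four_mul_mulVec_dotProduct_mulVec_mulVec_le hΛ (Bᵀ * P) hκ.le (by positivity) ?_ x Y φ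
    calc 4 * (‖toEuclideanCLM (𝕜 := ℝ) Λ‖ * ∑ i, ∑ j, (Bᵀ * P) i j ^ 2)
        = 2 / γ * (2 * γ * (‖toEuclideanCLM (𝕜 := ℝ) Λ‖ * ∑ i, ∑ j, (P * B) i j ^ 2)) := by
          rw [hfrob]; field_simp; ring
      _ ≤ 2 / γ * (κ * (β * μ)) := by gcongr
      _ = κ * (2 / γ * (β * μ)) := by ring
  have hdamping : 0 ≤ 2 * β / γ * T :=
    mul_nonneg (by positivity) (trace_transpose_mul_mul_self_nonneg hΛ Y)
  calc x ⬝ᵥ (Aᵀ * P + P * A) *ᵥ x + 4 * cross - 2 * β / γ * (1 + μ * (φ ⬝ᵥ φ)) * T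
      = x ⬝ᵥ (Aᵀ * P + P * A) *ᵥ x + 4 * cross
        - 2 / γ * (β * μ) * (T * (φ ⬝ᵥ φ)) - 2 * β / γ * T := by ring
    _ ≤ 0 := by linarith

theorem dotProduct_self_le_of_tunerLyapunov_le [DecidableEq n] (hP : P.PosDef)
    (hΛ : Λ.PosSemidef) (hγ : 0 ≤ γ) {v : ℝ} {x : n → ℝ} {X Y : Matrix m k ℝ}
    (hv : tunerLyapunov P Λ γ x X Y ≤ v) : x ⬝ᵥ x ≤ P⁻¹.trace * v := by
  have hX := trace_transpose_mul_mul_self_nonneg hΛ X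
  have hY := trace_transpose_mul_mul_self_nonneg hΛ Y
  have hPx : x ⬝ᵥ P *ᵥ x ≤ v := le_trans (le_add_of_nonneg_right (by positivity)) hv
  exact (dotProduct_self_le_trace_inv_mul_of_posDef hP x).trans
    (mul_le_mul_of_nonneg_left hPx hP.inv.posSemidef.trace_nonneg)

theorem sum_sq_le_of_tunerLyapunov_le [DecidableEq m] (hP : P.PosSemidef) (hΛ : Λ.PosDef)
    (hγ : 0 < γ) {v : ℝ} {x : n → ℝ} {X Y : Matrix m k ℝ} (hv : tunerLyapunov P Λ γ x X Y ≤ v) :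
    ∑ i, ∑ j, X i j ^ 2 ≤ Λ⁻¹.trace * (γ * v) ∧ ∑ i, ∑ j, Y i j ^ 2 ≤ Λ⁻¹.trace * (γ * v) := by
  have hX := trace_transpose_mul_mul_self_nonneg hΛ.posSemidef X
  have hY := trace_transpose_mul_mul_self_nonneg hΛ.posSemidef Y
  have hPx : 0 ≤ x ⬝ᵥ P *ᵥ x := hP.dotProduct_mulVec_nonneg x
  have hsum : (Xᵀ * Λ * X).trace + (Yᵀ * Λ * Y).trace ≤ γ * v :=
    (inv_mul_le_iff₀ hγ).1 ((le_add_of_nonneg_left hPx).trans hv)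
  have htrace : 0 ≤ Λ⁻¹.trace := hΛ.inv.posSemidef.trace_nonneg
  exact ⟨(sum_sq_le_trace_inv_mul_of_posDef hΛ X).trans (by gcongr; linarith),
    (sum_sq_le_trace_inv_mul_of_posDef hΛ Y).trans (by gcongr; linarith)⟩

theorem hot_boundedness_general [DecidableEq m] [DecidableEq n] (hP : P.PosDef) (hΛ : Λ.PosDef)
    (hκ : 0 < κ) (hA : (-(Aᵀ * P + P * A) - κ • 1).PosSemidef) (hγ : 0 < γ) (hβ : 0 ≤ β)
    (hμ : 2 * γ * (‖toEuclideanCLM (𝕜 := ℝ) Λ‖ * ∑ i, ∑ j, (P * B) i j ^ 2) ≤ κ * (β * μ))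
    (h : IsTunerSolution A P B Λ Θ γ β μ Φ e Θh Ξ) :
    ∃ C > 0, ∀ t ∈ Set.Ici (0 : ℝ),
      √(∑ i, e t i ^ 2) ≤ C ∧ √(∑ i, ∑ j, Θh t i j ^ 2) ≤ C ∧ √(∑ i, ∑ j, Ξ t i j ^ 2) ≤ C := by
  have hPsymm : P.IsSymm := isHermitian_iff_isSymm.1 hP.isHermitian
  have hΛsymm : Λ.IsSymm := isHermitian_iff_isSymm.1 hΛ.isHermitian
  set V : ℝ → ℝ := fun t => tunerLyapunov P Λ γ (e t) (Ξ t - Θ) (Θh t - Ξ t)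
  have hV : AntitoneOn V (Set.Ici 0) := antitoneOn_Ici_of_hasDerivWithinAt_nonpos
    (fun t ht => h.hasDerivWithinAt_tunerLyapunov hPsymm hΛsymm hγ.ne' ht)
    fun t _ => tunerLyapunovRate_nonpos hPsymm hΛ.posSemidef hκ hA hγ hβ hμ _ _ _
  set a := √(P⁻¹.trace * V 0)
  set b := √(Λ⁻¹.trace * (γ * V 0))
  set c := √(∑ i, ∑ j, Θ i j ^ 2)
  have ha : 0 ≤ a := Real.sqrt_nonneg _
  have hb : 0 ≤ b := Real.sqrt_nonneg _
  have hc : 0 ≤ c := Real.sqrt_nonneg _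
  refine ⟨a + 2 * b + c + 1, by positivity, fun t ht => ?_⟩
  have hVt : V t ≤ V 0 := hV Set.self_mem_Ici ht ht
  have he : √(∑ i, e t i ^ 2) ≤ a := Real.sqrt_le_sqrt <| by
    simpa only [dotProduct, ← sq] using
      dotProduct_self_le_of_tunerLyapunov_le hP hΛ.posSemidef hγ.le hVt
  obtain ⟨hX, hY⟩ := sum_sq_le_of_tunerLyapunov_le hP.posSemidef hΛ hγ hVt
  have hΞ := sqrt_sum_sq_add_le (Ξ t - Θ) Θ
  have hΘh := sqrt_sum_sq_add_le (Θh t - Ξ t) (Ξ t)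
  rw [sub_add_cancel] at hΞ hΘh
  have hXb := Real.sqrt_le_sqrt hX
  have hYb := Real.sqrt_le_sqrt hY
  exact ⟨by linarith, by linarith, by linarith⟩

end Tuner

/-- Theorem 4, boundedness. Along any solution of the high-order-tuner
error model, `e`, `Θ̂` and `Ξ` are bounded on `[0,∞)`. -/
theorem hot_boundedness
    (n m N : ℕ)
    (AH : Matrix (Fin n) (Fin n) ℝ) (B : Matrix (Fin n) (Fin m) ℝ)
    (Q P : Matrix (Fin n) (Fin n) ℝ)
    (hQ : Q.PosDef) (hP : P.PosDef)
    (hLyap : AHᵀ * P + P * AH = -Q)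
    (hQ2 : (Q - (2 : ℝ) • 1).PosSemidef)
    (Λ : Matrix (Fin m) (Fin m) ℝ) (hΛ : Λ.PosDef)
    (hΛnorm : ‖Matrix.toEuclideanCLM (𝕜 := ℝ) Λ‖ ≤ 1)
    (Θ : Matrix (Fin m) (Fin N) ℝ)
    (γ β μ : ℝ) (hγ : 0 < γ) (hβ : 0 < β)
    (hμ : (2 * γ / β) * ∑ i, ∑ j, ((P * B) i j) ^ 2 ≤ μ)
    (Φ : ℝ → Fin N → ℝ) (hΦ : ContinuousOn Φ (Set.Ici 0))
    (e : ℝ → Fin n → ℝ) (Θh Ξ : ℝ → Matrix (Fin m) (Fin N) ℝ)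
    (he : ∀ t ∈ Set.Ici (0 : ℝ),
      HasDerivAt e (AH.mulVec (e t) + (B * Λ * (Θh t - Θ)).mulVec (Φ t)) t)
    (hΞ : ∀ t ∈ Set.Ici (0 : ℝ), ∀ i j,
      HasDerivAt (fun s => Ξ s i j) (-γ * ((Bᵀ * P).mulVec (e t) i * Φ t j)) t)
    (hΘh : ∀ t ∈ Set.Ici (0 : ℝ), ∀ i j,
      HasDerivAt (fun s => Θh s i j)
        (-β * (Θh t i j - Ξ t i j) * (1 + μ * (Φ t ⬝ᵥ Φ t))) t) :
    ∃ C > 0, ∀ t ∈ Set.Ici (0 : ℝ),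
      Real.sqrt (∑ i, e t i ^ 2) ≤ C ∧
      Real.sqrt (∑ i, ∑ j, Θh t i j ^ 2) ≤ C ∧
      Real.sqrt (∑ i, ∑ j, Ξ t i j ^ 2) ≤ C := by
  refine hot_boundedness_general hP hΛ two_pos (by rwa [hLyap, neg_neg]) hγ hβ.le ?_
    ⟨fun t ht => (he t ht).hasDerivWithinAt, fun t ht i j => (hΞ t ht i j).hasDerivWithinAt,
      fun t ht i j => (hΘh t ht i j).hasDerivWithinAt⟩
  have hsum : 0 ≤ ∑ i, ∑ j, (P * B) i j ^ 2 := by positivity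
  have hgain := mul_le_of_le_one_left hsum hΛnorm
  rw [div_mul_eq_mul_div, div_le_iff₀ hβ] at hμ
  nlinarith [mul_le_mul_of_nonneg_left hgain hγ.le, mul_nonneg hγ.le hsum]
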